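/- Let 𝒮 = {(0,1),(1,−1),(−1,−1),(−2,1)} ⊆ ℤ². Then for all i, j, n ∈ ℕ: if there is no m ∈ ℕ with n = 2i + j + 4m, then q(i,j;n) = 0; and if n = 2i + j + 4m for some m ∈ ℕ, then q(i,j;n) · m! · (3m+2i+j+2)! · (2m+i+1)! · (2m+i+j+2)! = (i+1)·(j+1)·(i+j+2)·n!·(n+2)!. -/

import Mathlib

/-!
Removing the last step of a walk gives, for `(i,j)` in the quadrant,
`q(i,j;n+1) = ∑ s ∈ S, q((i,j) - s;n)`, where counts with endpoint outside the quadrant vanish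
(`walkCount_succ`, `walkCount_of_neg`). The closed form is therefore proved by induction on `n`.
For the present step set all predecessors of `(i,j)` lie in the quadrant or on one of the lines
`i = -1`, `j = -1`, where the factors `i + 1` and `j + 1` of the closed form vanish too, so no
boundary correction is needed. The statistic `2i + j` changes by `1` under the steps `(0,1)` and
`(1,-1)`, and by `-3` under the two others, so `m` counts the uses of the latter and the walk
exists only if `n = 2i + j + 4m`. After division by the common factorials, with
`n = 2i+j+4m`, `A = 3m+2i+j+2`, `B = 2m+i+1` and `C = 2m+i+j+2`, the recurrence becomes the
polynomial identity
`(i+1)(j+1)(i+j+2) n (n+2) = (i+1) j (i+j+1) A C + i (j+2) (i+j+2) A B`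
`+ (i+2)(j+2)(i+j+4) m B + (i+3) j (i+j+3) m C`.
-/

open Finset

/-- Partial sum of the first `m` steps of `f`. -/
def partialSum {n : ℕ} (f : Fin n → ℤ × ℤ) (m : ℕ) : ℤ × ℤ :=
  ∑ k ∈ Finset.univ.filter (fun k : Fin n => (k : ℕ) < m), f k

/-- Number of `n`-step quadrant walks from `(0,0)` to `(i,j)` with steps in `S`. -/
noncomputable def quadWalks (S : Finset (ℤ × ℤ)) (i j : ℕ) (n : ℕ) : ℕ :=
  Nat.card {f : Fin n → ℤ × ℤ //
    (∀ k, f k ∈ S) ∧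
    (∀ m : ℕ, m ≤ n → 0 ≤ (partialSum f m).1 ∧ 0 ≤ (partialSum f m).2) ∧
    partialSum f n = ((i : ℤ), (j : ℤ))}

/-- The step set `{(0,1),(1,−1),(−1,−1),(−2,1)}`. -/
def S16 : Finset (ℤ × ℤ) := {(0, 1), (1, -1), (-1, -1), (-2, 1)}

/-- `f` is a quadrant walk with steps in `S` that ends at `x`. The endpoint is an arbitrary point
of `ℤ²`, so that the predecessors of a boundary point need no special treatment. -/
def IsQuadWalk (S : Finset (ℤ × ℤ)) {n : ℕ} (f : Fin n → ℤ × ℤ) (x : ℤ × ℤ) : Prop :=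
  (∀ k, f k ∈ S) ∧
    (∀ m : ℕ, m ≤ n → 0 ≤ (partialSum f m).1 ∧ 0 ≤ (partialSum f m).2) ∧
    partialSum f n = x

/-- Number of `n`-step quadrant walks with steps in `S` and endpoint `x ∈ ℤ²`. -/
noncomputable def walkCount (S : Finset (ℤ × ℤ)) (n : ℕ) (x : ℤ × ℤ) : ℕ :=
  Nat.card {f : Fin n → ℤ × ℤ // IsQuadWalk S f x}

lemma partialSum_snoc_of_le {n : ℕ} (f : Fin n → ℤ × ℤ) (s : ℤ × ℤ) {m : ℕ} (hm : m ≤ n) :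
    partialSum (Fin.snoc f s : Fin (n + 1) → ℤ × ℤ) m = partialSum f m := by
  simp only [partialSum, Finset.sum_filter, Fin.sum_univ_castSucc, Fin.snoc_castSucc,
    Fin.snoc_last, Fin.val_castSucc, Fin.val_last]
  rw [if_neg (by omega), add_zero]

lemma partialSum_snoc_last {n : ℕ} (f : Fin n → ℤ × ℤ) (s : ℤ × ℤ) :
    partialSum (Fin.snoc f s : Fin (n + 1) → ℤ × ℤ) (n + 1) = partialSum f n + s := by
  simp only [partialSum, Finset.sum_filter, Fin.sum_univ_castSucc, Fin.snoc_castSucc,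
    Fin.snoc_last, Fin.val_castSucc, Fin.val_last]
  rw [if_pos (by omega)]
  congr 1
  refine Finset.sum_congr rfl fun k _ => ?_
  rw [if_pos (by omega), if_pos (by omega)]

lemma isQuadWalk_snoc {S : Finset (ℤ × ℤ)} {n : ℕ} (f : Fin n → ℤ × ℤ) (s x : ℤ × ℤ)
    (hx : 0 ≤ x.1 ∧ 0 ≤ x.2) :
    IsQuadWalk S (Fin.snoc f s : Fin (n + 1) → ℤ × ℤ) x ↔ s ∈ S ∧ IsQuadWalk S f (x - s) := by
  unfold IsQuadWalk
  rw [Fin.forall_fin_succ', partialSum_snoc_last, eq_sub_iff_add_eq]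
  simp only [Fin.snoc_castSucc, Fin.snoc_last]
  constructor
  · rintro ⟨⟨h1, h2⟩, h3, h4⟩
    refine ⟨h2, h1, fun m hm => ?_, h4⟩
    rw [← partialSum_snoc_of_le f s hm]
    exact h3 m (by omega)
  · rintro ⟨h2, h1, h3, h4⟩
    refine ⟨⟨h1, h2⟩, fun m hm => ?_, h4⟩
    rcases Nat.lt_or_ge n m with h | h
    · obtain rfl : m = n + 1 := by omega
      rw [partialSum_snoc_last, h4]
      exact hx
    · rw [partialSum_snoc_of_le f s h]
      exact h3 m h

instance finite_walks (S : Finset (ℤ × ℤ)) (n : ℕ) (x : ℤ × ℤ) :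
    Finite {f : Fin n → ℤ × ℤ // IsQuadWalk S f x} := by
  refine Finite.of_injective
    (fun f => (fun k => ⟨f.1 k, f.2.1 k⟩ : Fin n → {s // s ∈ S})) fun f g h => ?_
  ext1
  funext k
  exact congrArg Subtype.val (congrFun h k)

lemma sigma_walk_ext {S : Finset (ℤ × ℤ)} {n : ℕ} {x : ℤ × ℤ}
    {p q : Σ s : {s // s ∈ S}, {f : Fin n → ℤ × ℤ // IsQuadWalk S f (x - s.1)}}
    (h1 : p.1.1 = q.1.1) (h2 : p.2.1 = q.2.1) : p = q := by
  obtain ⟨⟨s, _⟩, ⟨f, _⟩⟩ := p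
  obtain ⟨⟨t, _⟩, ⟨g, _⟩⟩ := q
  simp only at h1 h2
  subst h1 h2
  rfl

/-- A walk of `n + 1` steps that ends at `x` in the quadrant is a last step `s ∈ S` together with
a walk of `n` steps that ends at `x - s`. -/
def walkEquiv (S : Finset (ℤ × ℤ)) (n : ℕ) (x : ℤ × ℤ) (hx : 0 ≤ x.1 ∧ 0 ≤ x.2) :
    {f : Fin (n + 1) → ℤ × ℤ // IsQuadWalk S f x} ≃
      Σ s : {s // s ∈ S}, {f : Fin n → ℤ × ℤ // IsQuadWalk S f (x - s.1)} where
  toFun f :=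
    have h := (isQuadWalk_snoc (S := S) (Fin.init f.1) (f.1 (Fin.last n)) x hx).1
      (by rw [Fin.snoc_init_self]; exact f.2)
    ⟨⟨f.1 (Fin.last n), h.1⟩, ⟨Fin.init f.1, h.2⟩⟩
  invFun p := ⟨Fin.snoc p.2.1 p.1.1, (isQuadWalk_snoc _ _ _ hx).2 ⟨p.1.2, p.2.2⟩⟩
  left_inv f := Subtype.ext (Fin.snoc_init_self f.1)
  right_inv p := sigma_walk_ext
    (Fin.snoc_last (α := fun _ => ℤ × ℤ) p.1.1 p.2.1)
    (Fin.init_snoc (α := fun _ => ℤ × ℤ) p.1.1 p.2.1)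

lemma walkCount_succ (S : Finset (ℤ × ℤ)) (n : ℕ) (x : ℤ × ℤ) (hx : 0 ≤ x.1 ∧ 0 ≤ x.2) :
    walkCount S (n + 1) x = ∑ s ∈ S, walkCount S n (x - s) := by
  unfold walkCount
  rw [Nat.card_congr (walkEquiv S n x hx), Nat.card_sigma]
  exact Finset.sum_coe_sort S fun s => Nat.card {f : Fin n → ℤ × ℤ // IsQuadWalk S f (x - s)}

lemma walkCount_of_neg (S : Finset (ℤ × ℤ)) (n : ℕ) (x : ℤ × ℤ) (hx : x.1 < 0 ∨ x.2 < 0) :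
    walkCount S n x = 0 := by
  have : IsEmpty {f : Fin n → ℤ × ℤ // IsQuadWalk S f x} := by
    refine ⟨fun f => ?_⟩
    obtain ⟨f, -, h2, h3⟩ := f
    have := h2 n le_rfl
    rw [h3] at this
    omega
  exact Nat.card_of_isEmpty

lemma walkCount_zero_zero (S : Finset (ℤ × ℤ)) : walkCount S 0 (0, 0) = 1 := by
  unfold walkCount
  rw [Nat.card_eq_one_iff_exists]
  refine ⟨⟨Fin.elim0, fun k => k.elim0, fun m _ => ?_, ?_⟩,
    fun f => Subtype.ext (Subsingleton.elim _ _)⟩ <;> simp [partialSum, Prod.zero_eq_mk]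

lemma walkCount_zero_ne (S : Finset (ℤ × ℤ)) (x : ℤ × ℤ) (hx : x ≠ (0, 0)) :
    walkCount S 0 x = 0 := by
  have : IsEmpty {f : Fin 0 → ℤ × ℤ // IsQuadWalk S f x} := by
    refine ⟨fun f => hx ?_⟩
    obtain ⟨f, -, -, h3⟩ := f
    rw [← h3]
    simp [partialSum, Prod.zero_eq_mk]
  exact Nat.card_of_isEmpty

lemma walkCount_S16_succ (n i j : ℕ) :
    walkCount S16 (n + 1) ((i : ℤ), (j : ℤ)) =
      walkCount S16 n ((i : ℤ), (j : ℤ) - 1) + walkCount S16 n ((i : ℤ) - 1, (j : ℤ) + 1) +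
      walkCount S16 n ((i : ℤ) + 1, (j : ℤ) + 1) +
      walkCount S16 n ((i : ℤ) + 2, (j : ℤ) - 1) := by
  rw [walkCount_succ _ _ _ ⟨by simp, by simp⟩, S16, Finset.sum_insert (by decide),
    Finset.sum_insert (by decide), Finset.sum_insert (by decide), Finset.sum_singleton]
  simp [add_assoc]

/-- The congruence and size condition on `2i + j`, at all points of `ℤ²`. -/
lemma walkCount_eq_zero (n : ℕ) : ∀ x : ℤ × ℤ,
    (¬ ∃ m : ℕ, (n : ℤ) = 2 * x.1 + x.2 + 4 * m) → walkCount S16 n x = 0 := by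
  induction n with
  | zero =>
    intro x hx
    refine walkCount_zero_ne _ _ ?_
    rintro rfl
    exact hx ⟨0, by simp⟩
  | succ n ih =>
    intro x hx
    by_cases h : 0 ≤ x.1 ∧ 0 ≤ x.2
    · rw [walkCount_succ _ _ _ h]
      refine Finset.sum_eq_zero fun s hs => ih _ ?_
      rintro ⟨m, hm⟩
      simp only [S16, Finset.mem_insert, Finset.mem_singleton] at hs
      rcases hs with rfl | rfl | rfl | rfl
      · exact hx ⟨m, by simp at hm ⊢; omega⟩
      · exact hx ⟨m, by simp at hm ⊢; omega⟩
      · exact hx ⟨m + 1, by simp at hm ⊢; omega⟩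
      · exact hx ⟨m + 1, by simp at hm ⊢; omega⟩
    · exact walkCount_of_neg _ _ _ (by omega)

lemma walkCount_formula (n : ℕ) : ∀ i j m : ℕ, n = 2 * i + j + 4 * m →
    walkCount S16 n ((i : ℤ), (j : ℤ)) * m.factorial * (3 * m + 2 * i + j + 2).factorial *
          (2 * m + i + 1).factorial * (2 * m + i + j + 2).factorial =
        (i + 1) * (j + 1) * (i + j + 2) * n.factorial * (n + 2).factorial := by
  induction n with
  | zero =>
    intro i j m h
    obtain ⟨rfl, rfl, rfl⟩ : i = 0 ∧ j = 0 ∧ m = 0 := by omega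
    simp [walkCount_zero_zero]
  | succ n ih =>
    intro i j m h
    rw [walkCount_S16_succ]
    -- The closed form at the four predecessors, over common factorials. Each equation holds
    -- at the boundary (`i = 0`, `j = 0` or `m = 0`) because both sides vanish.
    have h1 : walkCount S16 n ((i : ℤ), (j : ℤ) - 1) * m.factorial *
        (3 * m + 2 * i + j + 1).factorial * (2 * m + i + 1).factorial *
        (2 * m + i + j + 1).factorial =
        (i + 1) * j * (i + j + 1) * n.factorial * (n + 2).factorial := by
      rcases j with _ | j
      · rw [walkCount_of_neg _ _ _ (by simp)]; simp
      · have := ih i j m (by omega)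
        push_cast
        rw [add_sub_cancel_right]
        exact this
    have h2 : walkCount S16 n ((i : ℤ) - 1, (j : ℤ) + 1) * m.factorial *
        (3 * m + 2 * i + j + 1).factorial * (2 * m + i).factorial *
        (2 * m + i + j + 2).factorial =
        i * (j + 2) * (i + j + 2) * n.factorial * (n + 2).factorial := by
      rcases i with _ | i
      · rw [walkCount_of_neg _ _ _ (by simp)]; simp
      · have := ih i (j + 1) m (by omega)
        push_cast at this ⊢
        rw [add_sub_cancel_right]
        convert this using 2 <;> [congr 2; congr 1; skip] <;> [congr 1; skip; skip] <;> ring_nf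
    have h3 : walkCount S16 n ((i : ℤ) + 1, (j : ℤ) + 1) * m.factorial *
        (3 * m + 2 * i + j + 2).factorial * (2 * m + i).factorial *
        (2 * m + i + j + 2).factorial =
        (i + 2) * (j + 2) * (i + j + 4) * m * n.factorial * (n + 2).factorial := by
      rcases m with _ | m
      · rw [walkCount_eq_zero _ _ (by rintro ⟨m, hm⟩; simp at hm; omega)]; simp
      · have := ih (i + 1) (j + 1) m (by omega)
        push_cast at this
        rw [show 3 * m + 2 * (i + 1) + (j + 1) + 2 = 3 * (m + 1) + 2 * i + j + 2 by ring,
          show 2 * m + (i + 1) + 1 = 2 * (m + 1) + i by ring,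
          show 2 * m + (i + 1) + (j + 1) + 2 = 2 * (m + 1) + i + j + 2 by ring] at this
        rw [Nat.factorial_succ m]
        linear_combination (m + 1) * this
    have h4 : walkCount S16 n ((i : ℤ) + 2, (j : ℤ) - 1) * m.factorial *
        (3 * m + 2 * i + j + 2).factorial * (2 * m + i + 1).factorial *
        (2 * m + i + j + 1).factorial =
        (i + 3) * j * (i + j + 3) * m * n.factorial * (n + 2).factorial := by
      rcases j with _ | j
      · rw [walkCount_of_neg _ _ _ (by simp)]; simp
      rcases m with _ | m
      · rw [walkCount_eq_zero _ _ (by rintro ⟨m, hm⟩; simp at hm; omega)]; simp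
      · have := ih (i + 2) j m (by omega)
        push_cast at this ⊢
        rw [add_sub_cancel_right]
        rw [show 3 * m + 2 * (i + 2) + j + 2 = 3 * (m + 1) + 2 * i + (j + 1) + 2 by ring,
          show 2 * m + (i + 2) + 1 = 2 * (m + 1) + i + 1 by ring,
          show 2 * m + (i + 2) + j + 2 = 2 * (m + 1) + i + (j + 1) + 1 by ring] at this
        rw [Nat.factorial_succ m]
        linear_combination (m + 1) * this
    generalize walkCount S16 n ((i : ℤ), (j : ℤ) - 1) = c1 at *
    generalize walkCount S16 n ((i : ℤ) - 1, (j : ℤ) + 1) = c2 at *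
    generalize walkCount S16 n ((i : ℤ) + 1, (j : ℤ) + 1) = c3 at *
    generalize walkCount S16 n ((i : ℤ) + 2, (j : ℤ) - 1) = c4 at *
    clear ih
    have hA := Nat.factorial_succ (3 * m + 2 * i + j + 1)
    have hB := Nat.factorial_succ (2 * m + i)
    have hC := Nat.factorial_succ (2 * m + i + j + 1)
    have hn := Nat.factorial_succ n
    have hn2 := Nat.factorial_succ (n + 2)
    simp only [add_assoc, Nat.reduceAdd] at *
    generalize (3 * m + (2 * i + (j + 2))).factorial = fA at *
    generalize (3 * m + (2 * i + (j + 1))).factorial = fA' at *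
    generalize (2 * m + (i + (j + 2))).factorial = fC at *
    generalize (2 * m + (i + (j + 1))).factorial = fC' at *
    generalize (2 * m + (i + 1)).factorial = fB at *
    generalize (2 * m + i).factorial = fB' at *
    generalize (n + 3).factorial = fn3 at *
    generalize (n + 2).factorial = fn2 at *
    generalize (n + 1).factorial = fn1 at *
    generalize n.factorial = fn at *
    generalize m.factorial = fm at *
    -- The coefficients used at the end involve `n = 2i + j + 4m - 1`, hence the passage to `ℤ`.
    zify at *
    have hn' : (n : ℤ) = 2 * i + j + 4 * m - 1 := by linarith
    rw [hn'] at hn hn2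
    rw [hn, hn2]
    -- `h1`–`h4` are brought to the denominator `m! A! B! C!`; the other terms replace `A!`, `B!`,
    -- `C!` by `A (A-1)!`, `B (B-1)!`, `C (C-1)!`. What remains is the polynomial identity.
    linear_combination
      (3 * m + 2 * i + j + 2) * (2 * m + i + j + 2) * h1 +
      (3 * m + 2 * i + j + 2) * (2 * m + i + 1) * h2 + (2 * m + i + 1) * h3 +
      (2 * m + i + j + 2) * h4 +
      c1 * fm * fB * (fC * hA + (3 * m + 2 * i + j + 2) * fA' * hC) +
      c2 * fm * fC * (fB * hA + (3 * m + 2 * i + j + 2) * fA' * hB) +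
      c3 * fm * fA * fC * hB + c4 * fm * fA * fB * hC

/-- Hypergeometric formula for the model `{(0,1),(1,−1),(−1,−1),(−2,1)}`:
`q(i,j;n)` vanishes unless `n = 2i+j+4m`, in which case
`q(i,j;n) = (i+1)(j+1)(i+j+2)n!(n+2)!/(m!(3m+2i+j+2)!(2m+i+1)!(2m+i+j+2)!)`. -/
theorem stmt16 (i j n : ℕ) :
    ((¬ ∃ m : ℕ, n = 2 * i + j + 4 * m) → quadWalks S16 i j n = 0) ∧
    ∀ m : ℕ, n = 2 * i + j + 4 * m →
      quadWalks S16 i j n * m.factorial * (3 * m + 2 * i + j + 2).factorial *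
          (2 * m + i + 1).factorial * (2 * m + i + j + 2).factorial =
        (i + 1) * (j + 1) * (i + j + 2) * n.factorial * (n + 2).factorial := by
  refine ⟨fun h => ?_, walkCount_formula n i j⟩
  refine walkCount_eq_zero n ((i : ℤ), (j : ℤ)) ?_
  rintro ⟨m, hm⟩
  exact h ⟨m, by simp at hm; omega⟩
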